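/- Let K be a number field, let γ, θ ∈ K, let L = ℚ(θ) ⊆ K, and let d = [ℚ(θ) : ℚ]. Suppose Tr_{K/L}(γ) ≠ 0. Then the sequence x(k) = Tr_{K/ℚ}(γ·θ^k) satisfies no linear homogeneous recurrence of order smaller than d: if m ≥ 1 and r₁, …, r_m ∈ ℚ satisfy x(k+m) = r₁·x(k+m−1) + ⋯ + r_m·x(k) for all k ≥ 0, then m ≥ d. Consequently, the minimal polynomial of the linear recurrence sequence x(k) equals the minimal polynomial of θ over ℚ. -/

import Mathlib

open Polynomial IntermediateField

/-!
Let `θ` be separable over the base field `F`, and put `L = F(θ)` and `t = Tr_{K/L}(γ)`.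
Transitivity of the trace gives `x(k) = Tr_{L/F}(t θ ^ k)`. If `p` is the characteristic polynomial
of a recurrence satisfied by `x`, then by linearity `Tr_{L/F}(t q(θ) p(θ)) = 0` for every polynomial
`q`, that is, `t p(θ)` is orthogonal to `F[θ] = L` under the trace form. This form is nondegenerate,
so `t p(θ) = 0`, and `t ≠ 0` forces `p(θ) = 0`.
-/

section LinearRecurrence

-- `LinearRecurrence` lists its coefficients from the lowest term upwards.
theorem isSolution_mk_comp_rev_iff {R : Type*} [CommSemiring R] {m : ℕ} {r : Fin m → R}
    {u : ℕ → R} :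
    (LinearRecurrence.mk m (r ∘ Fin.rev)).IsSolution u ↔
      ∀ k, u (k + m) = ∑ j : Fin m, r j * u (k + (m - 1 - (j : ℕ))) := by
  refine forall_congr' fun k => Eq.congr_right (Fintype.sum_equiv Fin.revPerm _ _ fun i => ?_)
  have hi : m - 1 - (i.rev : ℕ) = i := by rw [Fin.val_rev]; lia
  simp only [Fin.revPerm_apply, Function.comp_apply, hi]

variable {R A : Type*} [CommRing R] [Ring A] [Algebra R A] {E : LinearRecurrence R} {φ : A →ₗ[R] R}
  {a : A}

theorem map_pow_mul_aeval_charPoly_eq_zero (h : E.IsSolution fun k => φ (a ^ k)) (k : ℕ) :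
    φ (a ^ k * aeval a E.charPoly) = 0 := by
  simp only [LinearRecurrence.charPoly, map_sub, map_sum, aeval_monomial, map_one, one_mul, mul_sub,
    Finset.mul_sum, ← Algebra.smul_def, mul_smul_comm, ← pow_add, map_smul, smul_eq_mul]
  exact sub_eq_zero.2 (h k)

theorem map_aeval_mul_charPoly_eq_zero (h : E.IsSolution fun k => φ (a ^ k)) (q : R[X]) :
    φ (aeval a (q * E.charPoly)) = 0 := by
  induction q using Polynomial.induction_on' with
  | add p q hp hq => rw [add_mul, map_add, map_add, hp, hq, add_zero]
  | monomial n c =>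
    rw [map_mul, aeval_monomial, ← Algebra.smul_def, smul_mul_assoc, map_smul,
      map_pow_mul_aeval_charPoly_eq_zero h, smul_zero]

end LinearRecurrence

theorem trace_mul_algebraMap {R S T : Type*} [CommRing R] [CommRing S] [CommRing T]
    [Algebra R S] [Algebra S T] [Algebra R T] [IsScalarTower R S T]
    [Module.Free R S] [Module.Finite R S] [Module.Free S T] [Module.Finite S T] (t : T) (s : S) :
    Algebra.trace R T (t * algebraMap S T s) = Algebra.trace R S (Algebra.trace S T t * s) := by
  rw [← Algebra.trace_trace (S := S), mul_comm t, ← Algebra.smul_def, map_smul, smul_eq_mul,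
    mul_comm s]

section Field

variable {F : Type*} [Field F] {E : LinearRecurrence F}

theorem aeval_gen_charPoly_eq_zero {L : Type*} [Field L] [Algebra F L] [Algebra.IsSeparable F L]
    (pb : PowerBasis F L) {t : L} (ht : t ≠ 0)
    (h : E.IsSolution fun k => Algebra.trace F L (t * pb.gen ^ k)) :
    aeval pb.gen E.charPoly = 0 := by
  have : FiniteDimensional F L := pb.finite
  have orthogonal (y : L) : Algebra.traceForm F L (t * aeval pb.gen E.charPoly) y = 0 := by
    obtain ⟨q, rfl⟩ := pb.exists_eq_aeval' y
    rw [Algebra.traceForm_apply, mul_assoc, ← map_mul, mul_comm E.charPoly]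
    exact map_aeval_mul_charPoly_eq_zero (φ := Algebra.traceForm F L t) h q
  have mul_charPoly_eq_zero : t * aeval pb.gen E.charPoly = 0 :=
    (traceForm_nondegenerate F L).1 _ orthogonal
  exact (mul_eq_zero.1 mul_charPoly_eq_zero).resolve_left ht

variable {K : Type*} [Field K] [Algebra F K] [FiniteDimensional F K] {γ θ : K}

theorem minpoly_dvd_charPoly (hθ : IsSeparable F θ) (htr : Algebra.trace F⟮θ⟯ K γ ≠ 0)
    (h : E.IsSolution fun k => Algebra.trace F K (γ * θ ^ k)) :
    minpoly F θ ∣ E.charPoly := by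
  have : Algebra.IsSeparable F F⟮θ⟯ := (isSeparable_adjoin_simple_iff_isSeparable F K).2 hθ
  have trace_eq (k : ℕ) : Algebra.trace F K (γ * θ ^ k) =
      Algebra.trace F F⟮θ⟯ (Algebra.trace F⟮θ⟯ K γ * AdjoinSimple.gen F θ ^ k) := by
    rw [← trace_mul_algebraMap, map_pow, AdjoinSimple.algebraMap_gen]
  simp only [trace_eq] at h
  rw [← minpoly_gen F θ]
  exact minpoly.dvd F _ (aeval_gen_charPoly_eq_zero (adjoin.powerBasis hθ.isIntegral) htr h)

theorem trace_sequence_minimal_order_general (hθ : IsSeparable F θ)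
    (htr : Algebra.trace F⟮θ⟯ K γ ≠ 0)
    (h : E.IsSolution fun k => Algebra.trace F K (γ * θ ^ k)) :
    (minpoly F θ).natDegree ≤ E.order :=
  calc
    (minpoly F θ).natDegree ≤ E.charPoly.natDegree :=
      natDegree_le_of_dvd (minpoly_dvd_charPoly hθ htr h) E.charPoly_monic.ne_zero
    _ = E.order := natDegree_eq_of_degree_eq_some E.charPoly_degree_eq_order

end Field

/-- Proposition 1(b). For `γ, θ` in a number field `K` with
`L = ℚ(θ)` and `Tr_{K/L}(γ) ≠ 0`, the sequence `x(k) = Tr_{K/ℚ}(γ·θ^k)`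
satisfies no linear homogeneous recurrence of order smaller than
`d = [ℚ(θ) : ℚ]`. -/
theorem trace_sequence_minimal_order
    (K : Type*) [Field K] [NumberField K] (γ θ : K)
    (htr : Algebra.trace (ℚ⟮θ⟯ : IntermediateField ℚ K) K γ ≠ 0)
    (m : ℕ) (hm : 1 ≤ m) (r : Fin m → ℚ)
    (hrec : ∀ k : ℕ,
      Algebra.trace ℚ K (γ * θ ^ (k + m)) =
        ∑ j : Fin m, r j * Algebra.trace ℚ K (γ * θ ^ (k + (m - 1 - (j : ℕ))))) :
    (minpoly ℚ θ).natDegree ≤ m :=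
  trace_sequence_minimal_order_general (Algebra.IsSeparable.isSeparable ℚ θ) htr
    (isSolution_mk_comp_rev_iff.2 hrec)
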